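/- Fix integers 0 ≤ T₀ < T, constants R_θ > 0 and ρ ∈ (0,1), and θ*_0, θ*_1 ∈ ℝ^d with ‖θ*_a‖₂ ≤ R_θ. For each t ∈ {1,…,T} let x_t, ε_t ∈ ℝ^d with ‖x_t‖₂ ≤ 1, x̃_t := x_t + ε_t, ‖x̃_t‖₂ ≤ 1, and |⟨θ*_1 − θ*_0, ε_t⟩| ≤ ρ·|⟨θ*_1 − θ*_0, x_t⟩|. Let p₀^{(t)} ∈ (0, 1/2]. For t ≤ T₀ let π_t(0), π_t(1) ≥ p₀^{(t)} be arbitrary with π_t(0)+π_t(1) = 1. For t > T₀ let θ̂_0^{(t−1)}, θ̂_1^{(t−1)} ∈ ℝ^d be arbitrary, let ã_t ∈ argmax_{a∈{0,1}} ⟨θ̂_a^{(t−1)}, x̃_t⟩, and set π_t(ã_t) = 1 − p₀^{(t)}, π_t(1−ã_t) = p₀^{(t)}. Let a*_t ∈ argmax_{a∈{0,1}} ⟨θ*_a, x_t⟩. Then Σ_{t=1}^T [⟨θ*_{a*_t}, x_t⟩ − (π_t(0)·⟨θ*_0, x_t⟩ + π_t(1)·⟨θ*_1, x_t⟩)] ≤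 2·T₀·R_θ + (2/(1−ρ))·Σ_{t=T₀+1}^T (p₀^{(t)}·R_θ + max_{a∈{0,1}} ‖θ̂_a^{(t−1)} − θ*_a‖₂). -/

import Mathlib

open RealInnerProductSpace Finset

/-- A vector in the unit ball pairs with `v` to at most `‖v‖` in absolute value. -/
theorem abs_inner_le_norm_of_norm_le_one {E : Type*} [NormedAddCommGroup E]
    [InnerProductSpace ℝ E] (v : E) {y : E} (hy : ‖y‖ ≤ 1) : |⟪v, y⟫| ≤ ‖v‖ :=
  (abs_real_inner_le_norm v y).trans (mul_le_of_le_one_right (norm_nonneg v) hy)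

/-- If the estimates `η, η'` of `θ, θ'` misorder the two actions at the perturbed context `x + e`,
the gap between the actions at `x` is controlled by the estimation errors. -/
theorem one_sub_mul_gap_le_of_misordered {E : Type*} [NormedAddCommGroup E]
    [InnerProductSpace ℝ E] {θ θ' η η' x e : E} {ρ : ℝ} (hxe : ‖x + e‖ ≤ 1)
    (he : |⟪θ - θ', e⟫| ≤ ρ * |⟪θ - θ', x⟫|) (hopt : ⟪θ', x⟫ ≤ ⟪θ, x⟫)
    (hest : ⟪η, x + e⟫ ≤ ⟪η', x + e⟫) :
    (1 - ρ) * (⟪θ, x⟫ - ⟪θ', x⟫) ≤ ‖η - θ‖ + ‖η' - θ'‖ := by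
  have h := abs_le.1 (abs_inner_le_norm_of_norm_le_one (η - θ) hxe)
  have h' := abs_le.1 (abs_inner_le_norm_of_norm_le_one (η' - θ') hxe)
  rw [inner_sub_left θ θ' x, abs_of_nonneg (sub_nonneg.2 hopt)] at he
  have he' := abs_le.1 he
  simp only [inner_sub_left, inner_add_right] at h h' he' hest
  linarith [h.1, h'.2, he'.1]

/-- Single-round regret of the clipped greedy policy, for a suboptimal action `θ'`
and an optimal action `θ`, in the case where the greedy action is the suboptimal one. -/
theorem regret_le_of_misordered {E : Type*} [NormedAddCommGroup E]
    [InnerProductSpace ℝ E] {θ θ' η η' x e : E} {ρ p R M : ℝ} (hρ : ρ < 1) (hp : 0 ≤ p)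
    (hR : 0 ≤ R) (hxe : ‖x + e‖ ≤ 1)
    (he : |⟪θ - θ', e⟫| ≤ ρ * |⟪θ - θ', x⟫|) (hopt : ⟪θ', x⟫ ≤ ⟪θ, x⟫)
    (hest : ⟪η, x + e⟫ ≤ ⟪η', x + e⟫) (hM : ‖η - θ‖ ≤ M) (hM' : ‖η' - θ'‖ ≤ M) :
    ⟪θ, x⟫ - (p * ⟪θ, x⟫ + (1 - p) * ⟪θ', x⟫) ≤ 2 / (1 - ρ) * (p * R + M) := by
  have hgap := one_sub_mul_gap_le_of_misordered hxe he hopt hest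
  rw [div_mul_eq_mul_div, le_div_iff₀ (sub_pos.2 hρ)]
  have hnonneg : 0 ≤ p * ((1 - ρ) * (⟪θ, x⟫ - ⟪θ', x⟫)) :=
    mul_nonneg hp (mul_nonneg (sub_pos.2 hρ).le (sub_nonneg.2 hopt))
  linarith [mul_nonneg hp hR]

/-- Single-round regret of the clipped greedy policy when the greedy action is optimal. -/
theorem regret_le_of_greedy_optimal {u v ρ p R M : ℝ} (hρ : ρ ∈ Set.Ioo (0 : ℝ) 1) (hp : 0 ≤ p)
    (hM : 0 ≤ M) (hu : |u| ≤ R) (hv : |v| ≤ R) :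
    u - ((1 - p) * u + p * v) ≤ 2 / (1 - ρ) * (p * R + M) := by
  have hR : 0 ≤ R := (abs_nonneg u).trans hu
  have hfactor : 2 ≤ 2 / (1 - ρ) := by
    rw [le_div_iff₀ (sub_pos.2 hρ.2)]
    linarith [hρ.1]
  have hgap : p * (u - v) ≤ p * (2 * R) :=
    mul_le_mul_of_nonneg_left (by linarith [(abs_le.1 hu).2, (abs_le.1 hv).1]) hp
  have hpR := mul_nonneg hp hR
  linarith [mul_le_mul_of_nonneg_right hfactor (add_nonneg hpR hM)]

/-- The regret of any randomized choice between two actions with rewards in `[-R, R]`. -/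
theorem regret_le_two_mul {u v w q r R : ℝ} (hq : 0 ≤ q) (hr : 0 ≤ r) (hqr : q + r = 1)
    (hu : |u| ≤ R) (hv : |v| ≤ R) (hw : |w| ≤ R) : w - (q * u + r * v) ≤ 2 * R := by
  have h₁ := mul_le_mul_of_nonneg_left (abs_le.1 hu).1 hq
  have h₂ := mul_le_mul_of_nonneg_left (abs_le.1 hv).1 hr
  have h₃ : q * -R + r * -R = -R := by rw [← add_mul, hqr, one_mul]
  linarith [(abs_le.1 hw).2]

theorem stmt5 (d : ℕ) (hd : 1 ≤ d) (T₀ T : ℕ) (hT : T₀ < T)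
    (Rθ ρ : ℝ) (hRθ : 0 < Rθ) (hρ : ρ ∈ Set.Ioo (0:ℝ) 1)
    (θs : Fin 2 → EuclideanSpace ℝ (Fin d)) (hθ : ∀ a, ‖θs a‖ ≤ Rθ)
    (x ε : ℕ → EuclideanSpace ℝ (Fin d))
    (hx : ∀ t ∈ Finset.Icc 1 T, ‖x t‖ ≤ 1)
    (hxt : ∀ t ∈ Finset.Icc 1 T, ‖x t + ε t‖ ≤ 1)
    (hε : ∀ t ∈ Finset.Icc 1 T,
      |⟪θs 1 - θs 0, ε t⟫| ≤ ρ * |⟪θs 1 - θs 0, x t⟫|)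
    (p₀ : ℕ → ℝ) (hp₀ : ∀ t ∈ Finset.Icc 1 T, p₀ t ∈ Set.Ioc (0:ℝ) (1/2))
    (π : ℕ → Fin 2 → ℝ)
    (hπwarm : ∀ t ∈ Finset.Icc 1 T₀, (∀ a, p₀ t ≤ π t a) ∧ π t 0 + π t 1 = 1)
    (θh : ℕ → Fin 2 → EuclideanSpace ℝ (Fin d))
    (atil : ℕ → Fin 2)
    (hgreedy : ∀ t ∈ Finset.Icc (T₀+1) T,
      ∀ a, ⟪θh t a, x t + ε t⟫ ≤ ⟪θh t (atil t), x t + ε t⟫)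
    (hπgreedy : ∀ t ∈ Finset.Icc (T₀+1) T,
      π t (atil t) = 1 - p₀ t ∧ π t (1 - atil t) = p₀ t)
    (astar : ℕ → Fin 2)
    (hastar : ∀ t ∈ Finset.Icc 1 T, ∀ a, ⟪θs a, x t⟫ ≤ ⟪θs (astar t), x t⟫) :
    ∑ t ∈ Finset.Icc 1 T,
        (⟪θs (astar t), x t⟫ - (π t 0 * ⟪θs 0, x t⟫ + π t 1 * ⟪θs 1, x t⟫))
      ≤ 2 * T₀ * Rθ + (2 / (1 - ρ)) *
          ∑ t ∈ Finset.Icc (T₀+1) T,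
            (p₀ t * Rθ + max ‖θh t 0 - θs 0‖ ‖θh t 1 - θs 1‖) := by
  have hreward : ∀ t ∈ Icc 1 T, ∀ a, |⟪θs a, x t⟫| ≤ Rθ := fun t ht a =>
    (abs_inner_le_norm_of_norm_le_one (θs a) (hx t ht)).trans (hθ a)
  have hsplit : Icc 1 T = Icc 1 T₀ ∪ Icc (T₀ + 1) T := by
    ext t
    simp only [mem_union, mem_Icc]
    omega
  have hdisj : Disjoint (Icc 1 T₀) (Icc (T₀ + 1) T) := by
    rw [Finset.disjoint_left]
    intro t h₁ h₂
    simp only [mem_Icc] at h₁ h₂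
    omega
  have hwarm : ∀ t ∈ Icc 1 T₀,
      ⟪θs (astar t), x t⟫ - (π t 0 * ⟪θs 0, x t⟫ + π t 1 * ⟪θs 1, x t⟫) ≤ 2 * Rθ := by
    intro t ht
    have htT : t ∈ Icc 1 T := hsplit ▸ mem_union_left _ ht
    obtain ⟨hπ, hsum⟩ := hπwarm t ht
    have hp := (hp₀ t htT).1.le
    exact regret_le_two_mul (hp.trans (hπ 0)) (hp.trans (hπ 1)) hsum
      (hreward t htT 0) (hreward t htT 1) (hreward t htT _)
  have hround : ∀ t ∈ Icc (T₀ + 1) T,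
      ⟪θs (astar t), x t⟫ - (π t 0 * ⟪θs 0, x t⟫ + π t 1 * ⟪θs 1, x t⟫)
        ≤ 2 / (1 - ρ) * (p₀ t * Rθ + max ‖θh t 0 - θs 0‖ ‖θh t 1 - θs 1‖) := by
    intro t ht
    have htT : t ∈ Icc 1 T := hsplit ▸ mem_union_right _ ht
    have hp := (hp₀ t htT).1.le
    have hM₀ := le_max_left ‖θh t 0 - θs 0‖ ‖θh t 1 - θs 1‖
    have hM₁ := le_max_right ‖θh t 0 - θs 0‖ ‖θh t 1 - θs 1‖
    have hM := (norm_nonneg _).trans hM₀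
    have hu := hreward t htT
    have hε₁ := hε t htT
    have hε₀ : |⟪θs 0 - θs 1, ε t⟫| ≤ ρ * |⟪θs 0 - θs 1, x t⟫| := by
      rw [← neg_sub (θs 1) (θs 0), inner_neg_left, inner_neg_left, abs_neg, abs_neg]
      exact hε₁
    have hg := hgreedy t ht
    have hs := hastar t htT
    obtain ⟨hπ, hπ'⟩ := hπgreedy t ht
    have hcases : ∀ a : Fin 2, a = 0 ∨ a = 1 := by decide
    rcases hcases (atil t) with ha | ha <;> rcases hcases (astar t) with hb | hb <;>
      simp only [ha, hb, sub_zero, sub_self] at hπ hπ' hg hs ⊢ <;> rw [hπ, hπ']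
    · exact regret_le_of_greedy_optimal hρ hp hM (hu 0) (hu 1)
    · rw [add_comm ((1 - p₀ t) * _)]
      exact regret_le_of_misordered hρ.2 hp hRθ.le (hxt t htT) hε₁ (hs 0) (hg 1) hM₁ hM₀
    · exact regret_le_of_misordered hρ.2 hp hRθ.le (hxt t htT) hε₀ (hs 1) (hg 0) hM₀ hM₁
    · rw [add_comm (p₀ t * ⟪θs 0, x t⟫)]
      exact regret_le_of_greedy_optimal hρ hp hM (hu 1) (hu 0)
  rw [hsplit, sum_union hdisj, mul_sum]
  refine add_le_add ((sum_le_card_nsmul _ _ _ hwarm).trans_eq ?_) (sum_le_sum hround)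
  rw [Nat.card_Icc, Nat.add_sub_cancel, nsmul_eq_mul]
  ring
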